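/- arXiv:math/0010330 — 2 statements merged into one kernel-verified Lean document; each statement's English description precedes it below -/
import Mathlib

section
/- For every n ≥ 1 there exists a unique element f_n ∈ End_ℂ((ℂ²)^{⊗n}) such that: f_n lies in the unital subalgebra generated by E_1, …, E_{n−1}; f_n² = f_n ≠ 0; and E_i f_n = f_n E_i = 0 for all 1 ≤ i ≤ n−1. (This f_n is the image of the n-th Jones–Wenzl idempotent.) -/
open scoped TensorProduct
open Complex

noncomputable section

/-- The four generators `X`, `Y`, `K`, `K⁻¹` of the algebra `Aₜ`. -/
inductive QGen : Type
  | X | Y | K | K'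
  deriving DecidableEq

/-- The image of a generator in the free algebra on the generators. -/
def qg (x : QGen) : FreeAlgebra ℂ QGen := FreeAlgebra.ι ℂ x

/-- The defining relations of `Aₜ`:
`KX = t²XK`, `KY = t⁻²YK`, `XY − YX = (K² − K⁻²)/(t² − t⁻²)`, `KK⁻¹ = K⁻¹K = 1`. -/
inductive QRel (t : ℂ) : FreeAlgebra ℂ QGen → FreeAlgebra ℂ QGen → Prop
  | KX : QRel t (qg .K * qg .X) ((t ^ 2 : ℂ) • (qg .X * qg .K))
  | KY : QRel t (qg .K * qg .Y) ((t⁻¹ ^ 2 : ℂ) • (qg .Y * qg .K))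
  | XY : QRel t (qg .X * qg .Y - qg .Y * qg .X)
      (((t ^ 2 - t⁻¹ ^ 2)⁻¹ : ℂ) • (qg .K * qg .K - qg .K' * qg .K'))
  | KK' : QRel t (qg .K * qg .K') 1
  | K'K : QRel t (qg .K' * qg .K) 1

/-- The algebra `Aₜ`: the quotient of the free algebra by the defining relations. -/
abbrev At (t : ℂ) : Type := RingQuot (QRel t)

/-- The generator `X` in `Aₜ`. -/
def aX (t : ℂ) : At t := RingQuot.mkAlgHom ℂ (QRel t) (qg .X)
/-- The generator `Y` in `Aₜ`. -/
def aY (t : ℂ) : At t := RingQuot.mkAlgHom ℂ (QRel t) (qg .Y)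
/-- The generator `K` in `Aₜ`. -/
def aK (t : ℂ) : At t := RingQuot.mkAlgHom ℂ (QRel t) (qg .K)
/-- The generator `K⁻¹` in `Aₜ`. -/
def aK' (t : ℂ) : At t := RingQuot.mkAlgHom ℂ (QRel t) (qg .K')

/-- The quantum integer `[n] = (t^{2n} − t^{−2n})/(t² − t⁻²)`. -/
def qint (t : ℂ) (n : ℤ) : ℂ := (t ^ (2 * n) - t ^ (-(2 * n))) / (t ^ 2 - t⁻¹ ^ 2)

/-- The matrix of `ρ_m(K)`: `K e_j = t^{m−2j} e_j`. -/
def Kmat (t : ℂ) (m : ℕ) : Matrix (Fin (m + 1)) (Fin (m + 1)) ℂ :=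
  Matrix.diagonal fun j => t ^ ((m : ℤ) - 2 * (j : ℤ))

/-- The matrix of `ρ_m(K⁻¹)`: `K⁻¹ e_j = t^{−(m−2j)} e_j`. -/
def K'mat (t : ℂ) (m : ℕ) : Matrix (Fin (m + 1)) (Fin (m + 1)) ℂ :=
  Matrix.diagonal fun j => t ^ (-((m : ℤ) - 2 * (j : ℤ)))

/-- The matrix of `ρ_m(X)`: `X e_j = [j] e_{j−1}` (with `e_{−1} = 0`). -/
def Xmat (t : ℂ) (m : ℕ) : Matrix (Fin (m + 1)) (Fin (m + 1)) ℂ :=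
  Matrix.of fun i j => if (j : ℕ) = (i : ℕ) + 1 then qint t (j : ℤ) else 0

/-- The matrix of `ρ_m(Y)`: `Y e_j = [m−j] e_{j+1}` (with `e_{m+1} = 0`). -/
def Ymat (t : ℂ) (m : ℕ) : Matrix (Fin (m + 1)) (Fin (m + 1)) ℂ :=
  Matrix.of fun i j => if (i : ℕ) = (j : ℕ) + 1 then qint t ((m : ℤ) - (j : ℤ)) else 0

/-- `ρ` is the representation `ρ_m : Aₜ → M_{m+1}(ℂ)` determined by the matrices above. -/
def IsRho (t : ℂ) (m : ℕ) (ρ : At t →ₐ[ℂ] Matrix (Fin (m + 1)) (Fin (m + 1)) ℂ) : Prop :=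
  ρ (aX t) = Xmat t m ∧ ρ (aY t) = Ymat t m ∧ ρ (aK t) = Kmat t m ∧ ρ (aK' t) = K'mat t m

/-- The `n`-fold tensor power `1̲^{⊗n} = (ℂ²)^{⊗n}`, realized concretely as the space of
ℂ-valued functions on the set of multi-indices `(Fin 2)ⁿ` (the basis vector
`e_{s 0} ⊗ ⋯ ⊗ e_{s (n−1)}` corresponds to the delta function at `s`). -/
abbrev Vn (n : ℕ) : Type := (Fin n → Fin 2) → ℂ

/-- Pointwise multiplication by a fixed function, as a linear endomorphism. -/
def ptwiseMul {α : Type} (c : α → ℂ) : (α → ℂ) →ₗ[ℂ] (α → ℂ) where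
  toFun f := fun u => c u * f u
  map_add' f g := by funext u; simp [mul_add]
  map_smul' r f := by funext u; simp [smul_eq_mul]; ring

/-- The coefficients of `μ`: `μ(e_a ⊗ e_b) = muC a b`, i.e. `μ(e_{1/2}⊗e_{−1/2}) = it`,
`μ(e_{−1/2}⊗e_{1/2}) = −it⁻¹`, `0` otherwise (recall `e_{1/2} = e₀`, `e_{−1/2} = e₁`). -/
def muC (t : ℂ) : Fin 2 → Fin 2 → ℂ :=
  ![![0, Complex.I * t], ![-(Complex.I * t⁻¹), 0]]

/-- The coefficients of `η`: `η(1) = ∑_{a,b} etaC a b • e_a ⊗ e_b`, i.e.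
`η(1) = it·e_{1/2}⊗e_{−1/2} − it⁻¹·e_{−1/2}⊗e_{1/2}`. -/
def etaC (t : ℂ) : Fin 2 → Fin 2 → ℂ :=
  ![![0, Complex.I * t], ![-(Complex.I * t⁻¹), 0]]

/-- The Temperley–Lieb generator `E = id^{⊗i} ⊗ (η∘μ) ⊗ id^{⊗(n−i−2)}` acting on
`1̲^{⊗n}`, where `η∘μ` acts on the tensor factors in positions `i` and `i+1`
(`0`-indexed; this is `E_{i+1}` in the `1`-indexed labelling). On basis vectors,
`E (e_{s}) = μ(e_{s i} ⊗ e_{s (i+1)}) · ∑_{a b} etaC a b • e_{s[i:=a][i+1:=b]}`,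
which in function coordinates is the formula below. -/
def TLE (t : ℂ) (n i : ℕ) (h : i + 1 < n) : Module.End ℂ (Vn n) :=
  (ptwiseMul fun u => etaC t (u ⟨i, Nat.lt_of_succ_lt h⟩) (u ⟨i + 1, h⟩)) ∘ₗ
    ∑ a : Fin 2, ∑ b : Fin 2, muC t a b •
      LinearMap.funLeft ℂ ℂ (fun u =>
        Function.update (Function.update u (⟨i, Nat.lt_of_succ_lt h⟩ : Fin n) a)
          (⟨i + 1, h⟩ : Fin n) b)

/-!
Wenzl's recursion `p₀ = 1`, `pₘ₊₁ = pₘ - [m+1]/[m+2] • pₘ eₘ pₘ` produces the idempotent. The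
partial trace formula `eₘ pₘ eₘ = [m+2]/[m+1] • eₘ pₘ₋₁` says that `[m+1]/[m+2] • pₘ eₘ pₘ` is an
idempotent below `pₘ`, so that `pₘ₊₁` is an idempotent, and that `eₘ pₘ₊₁ = 0`. It does not vanish
because it fixes `e_{1/2}^{⊗n}`, which all `Eᵢ` kill. An element of the algebra generated by the
`Eᵢ` acts by a scalar on anything they annihilate, and a nonzero idempotent acts on itself by `1`;
so two Jones–Wenzl idempotents `f`, `g` satisfy `f = f g = g`.

The matrices `M` of `μ` and `H` of `η` are mutually inverse: this is the snake identity, from which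
the relations `Eᵢ Eᵢ₊₁ Eᵢ = Eᵢ` and `Eᵢ₊₁ Eᵢ Eᵢ₊₁ = Eᵢ₊₁` follow.
-/

section QuantumInt

variable {R : Type*} [CommRing R]

/-- The quantum integer `[k]` with `[2] = δ`, as a value of a rescaled Chebyshev polynomial of the
second kind. The index shift makes `[0] = 0` and `[1] = 1`. At `δ = -(t ^ 2 + t⁻¹ ^ 2)` it agrees
with `qint t k` up to the sign `(-1) ^ (k - 1)`, and it stays meaningful where `t ^ 4 = 1`. -/
def quantumInt (δ : R) (k : ℕ) : R :=
  (Polynomial.Chebyshev.S R (k - 1)).eval δ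

@[simp]
lemma quantumInt_zero (δ : R) : quantumInt δ 0 = 0 := by simp [quantumInt]

@[simp]
lemma quantumInt_one (δ : R) : quantumInt δ 1 = 1 := by simp [quantumInt]

lemma quantumInt_add_two (δ : R) (k : ℕ) :
    quantumInt δ (k + 2) = δ * quantumInt δ (k + 1) - quantumInt δ k := by
  have hS := Polynomial.Chebyshev.S_add_one R k
  simp only [quantumInt]
  push_cast
  rw [show (k : ℤ) + 2 - 1 = k + 1 by ring, hS]
  simp

lemma pow_mul_quantumInt_add_eq_geom_sum {p q : R} (hqp : q * p = 1) (k : ℕ) :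
    q ^ k * quantumInt (q + p) (k + 1) = ∑ j ∈ Finset.range (k + 1), (q ^ 2) ^ j := by
  induction k using Nat.twoStepInduction with
  | zero => simp
  | one =>
    simp only [quantumInt_add_two, zero_add, quantumInt_one, quantumInt_zero,
      Finset.sum_range_succ, Finset.sum_range_zero]
    linear_combination hqp
  | more k ih₀ ih₁ =>
    rw [quantumInt_add_two, Finset.sum_range_succ, ← ih₁]
    rw [Finset.sum_range_succ, ← ih₀] at ih₁
    linear_combination q ^ 2 * ih₁ + q ^ (k + 1) * quantumInt (q + p) (k + 2) * hqp

end QuantumInt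

section TemperleyLieb

/-- The Temperley–Lieb relations with loop value `δ` for the elements `e 0, …, e (N - 1)` of an
algebra; the values of `e` from `N` on are unconstrained. -/
structure IsTemperleyLieb {R A : Type*} [CommSemiring R] [Semiring A] [Algebra R A]
    (δ : R) (N : ℕ) (e : ℕ → A) : Prop where
  mul_self {i : ℕ} (hi : i < N) : e i * e i = δ • e i
  mul_mul_of_adjacent {i j : ℕ} (hi : i < N) (hj : j < N) (hij : i + 1 = j ∨ j + 1 = i) :
    e i * e j * e i = e i
  commute {i j : ℕ} (hij : i + 2 ≤ j) (hj : j < N) : Commute (e i) (e j)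

/-- The `m`-th term of Wenzl's recursion, built from `e 0, …, e (m - 1)`: in the numbering of the
strands of a Temperley–Lieb algebra this is the Jones–Wenzl idempotent on `m + 1` strands. -/
def jonesWenzl {K A : Type*} [Field K] [Ring A] [Algebra K A] (δ : K) (e : ℕ → A) : ℕ → A
  | 0 => 1
  | m + 1 => jonesWenzl δ e m - (quantumInt δ (m + 1) / quantumInt δ (m + 2)) •
      (jonesWenzl δ e m * e m * jonesWenzl δ e m)

/-- The characterisation of a Jones–Wenzl idempotent in the algebra generated by `S`. -/
structure IsJonesWenzl (R : Type*) {A : Type*} [CommSemiring R] [Semiring A] [Algebra R A]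
    (S : Set A) (f : A) : Prop where
  mem_adjoin : f ∈ Algebra.adjoin R S
  isIdempotentElem : IsIdempotentElem f
  ne_zero : f ≠ 0
  gen_mul {s : A} (hs : s ∈ S) : s * f = 0
  mul_gen {s : A} (hs : s ∈ S) : f * s = 0

lemma exists_forall_mul_eq_smul_of_mem_adjoin {R A : Type*} [CommSemiring R] [Semiring A]
    [Algebra R A] {S : Set A} {x : A} (hx : x ∈ Algebra.adjoin R S) :
    ∃ c : R, (∀ g, (∀ s ∈ S, s * g = 0) → x * g = c • g) ∧
      ∀ g, (∀ s ∈ S, g * s = 0) → g * x = c • g := by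
  induction hx using Algebra.adjoin_induction with
  | mem s hs =>
    exact ⟨0, fun g hg => by rw [hg s hs, zero_smul], fun g hg => by rw [hg s hs, zero_smul]⟩
  | algebraMap r =>
    exact ⟨r, fun g _ => (Algebra.smul_def r g).symm,
      fun g _ => by rw [Algebra.smul_def, Algebra.commutes]⟩
  | add x y _ _ hx hy =>
    obtain ⟨a, hxl, hxr⟩ := hx
    obtain ⟨b, hyl, hyr⟩ := hy
    exact ⟨a + b, fun g hg => by rw [add_mul, hxl g hg, hyl g hg, add_smul],
      fun g hg => by rw [mul_add, hxr g hg, hyr g hg, add_smul]⟩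
  | mul x y _ _ hx hy =>
    obtain ⟨a, hxl, hxr⟩ := hx
    obtain ⟨b, hyl, hyr⟩ := hy
    exact ⟨a * b,
      fun g hg => by rw [mul_assoc, hyl g hg, mul_smul_comm, hxl g hg, smul_smul, mul_comm],
      fun g hg => by rw [← mul_assoc, hxr g hg, smul_mul_assoc, hyr g hg, smul_smul]⟩

namespace IsJonesWenzl

variable {K A : Type*} [Field K] [Ring A] [Algebra K A] {S : Set A} {f g : A}

lemma mul_eq_right (hf : IsJonesWenzl K S f) (hg : ∀ s ∈ S, s * g = 0) : f * g = g := by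
  obtain ⟨c, hc, -⟩ := exists_forall_mul_eq_smul_of_mem_adjoin hf.mem_adjoin
  have hcf : c • f = (1 : K) • f := by
    rw [← hc f fun _ => hf.gen_mul, hf.isIdempotentElem.eq, one_smul]
  rw [hc g hg, smul_left_injective K hf.ne_zero hcf, one_smul]

lemma mul_eq_left (hf : IsJonesWenzl K S f) (hg : ∀ s ∈ S, g * s = 0) : g * f = g := by
  obtain ⟨c, -, hc⟩ := exists_forall_mul_eq_smul_of_mem_adjoin hf.mem_adjoin
  have hcf : c • f = (1 : K) • f := by
    rw [← hc f fun _ => hf.mul_gen, hf.isIdempotentElem.eq, one_smul]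
  rw [hc g hg, smul_left_injective K hf.ne_zero hcf, one_smul]

lemma unique (hf : IsJonesWenzl K S f) (hg : IsJonesWenzl K S g) : f = g :=
  (hg.mul_eq_left fun _ => hf.mul_gen).symm.trans (hf.mul_eq_right fun _ => hg.gen_mul)

end IsJonesWenzl

section Recursion

variable {K A : Type*} [Field K] [Ring A] [Algebra K A] {δ : K} {e : ℕ → A}

@[simp]
lemma jonesWenzl_zero : jonesWenzl δ e 0 = 1 := rfl

lemma jonesWenzl_succ (m : ℕ) :
    jonesWenzl δ e (m + 1) = jonesWenzl δ e m - (quantumInt δ (m + 1) / quantumInt δ (m + 2)) •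
      (jonesWenzl δ e m * e m * jonesWenzl δ e m) := rfl

lemma jonesWenzl_mul_jonesWenzl_succ {m : ℕ}
    (hp : IsIdempotentElem (jonesWenzl δ e m)) :
    jonesWenzl δ e m * jonesWenzl δ e (m + 1) = jonesWenzl δ e (m + 1) := by
  simp only [jonesWenzl_succ, mul_sub, mul_smul_comm, ← mul_assoc, hp.eq]

lemma jonesWenzl_mem {B : Subalgebra K A} {m : ℕ} (he : ∀ i < m, e i ∈ B) :
    jonesWenzl δ e m ∈ B := by
  induction m with
  | zero => exact B.one_mem
  | succ m ih =>
    have hm := ih fun i hi => he i (by lia)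
    exact B.sub_mem hm (B.smul_mem (B.mul_mem (B.mul_mem hm (he m (by lia))) hm) _)

lemma commute_jonesWenzl_of_forall {x : A} {m : ℕ} (hx : ∀ i < m, Commute x (e i)) :
    Commute x (jonesWenzl δ e m) := by
  have hmem : jonesWenzl δ e m ∈ Subalgebra.centralizer K {x} :=
    jonesWenzl_mem fun i hi => by
      simpa [Subalgebra.mem_centralizer_iff, commute_iff_eq] using hx i hi
  simpa [Subalgebra.mem_centralizer_iff, commute_iff_eq] using hmem

lemma op_jonesWenzl (m : ℕ) :
    MulOpposite.op (jonesWenzl δ e m) = jonesWenzl δ (fun i => MulOpposite.op (e i)) m := by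
  induction m with
  | zero => rfl
  | succ m ih => simp [jonesWenzl_succ, ← ih, mul_assoc]

lemma jonesWenzl_smul_eq_self {M : Type*} [AddCommGroup M] [Module K M] [Module A M]
    [IsScalarTower K A M] {v : M} {m : ℕ} (hv : ∀ i < m, e i • v = 0) :
    jonesWenzl δ e m • v = v := by
  induction m with
  | zero => exact one_smul A v
  | succ m ih =>
    have hm := ih fun i hi => hv i (by lia)
    rw [jonesWenzl_succ, sub_smul, smul_assoc, mul_smul, mul_smul, hm, hv m m.lt_succ_self,
      smul_zero, smul_zero, sub_zero]

end Recursion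

lemma isIdempotentElem_sub_smul_mul_mul {R A : Type*} [CommRing R] [Ring A] [Algebra R A]
    {r s : R} {p x : A} (hp : IsIdempotentElem p) (hx : x * p * x * p = s • (x * p))
    (hrs : r * s = 1) : IsIdempotentElem (p - r • (p * x * p)) := by
  have hpq : p * (r • (p * x * p)) = r • (p * x * p) := by
    rw [mul_smul_comm, ← mul_assoc, ← mul_assoc, hp.eq]
  have hqp : r • (p * x * p) * p = r • (p * x * p) := by
    rw [smul_mul_assoc, mul_assoc, hp.eq]
  have hsq : p * x * p * (p * x * p) = s • (p * x * p) := by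
    calc p * x * p * (p * x * p) = p * (x * (p * p) * x * p) := by simp only [mul_assoc]
      _ = s • (p * x * p) := by rw [hp.eq, hx, mul_smul_comm, mul_assoc]
  have hqq : r • (p * x * p) * (r • (p * x * p)) = r • (p * x * p) := by
    rw [smul_mul_smul_comm, hsq, smul_smul, mul_assoc, hrs, mul_one]
  rw [IsIdempotentElem, mul_sub, sub_mul, sub_mul, hpq, hqp, hqq, hp.eq, sub_self, sub_zero]

namespace IsTemperleyLieb

lemma op {R A : Type*} [CommSemiring R] [Semiring A] [Algebra R A] {δ : R} {N : ℕ} {e : ℕ → A}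
    (h : IsTemperleyLieb δ N e) : IsTemperleyLieb δ N fun i => MulOpposite.op (e i) where
  mul_self hi := by rw [← MulOpposite.op_mul, h.mul_self hi, MulOpposite.op_smul]
  mul_mul_of_adjacent hi hj hij := by
    rw [← MulOpposite.op_mul, ← MulOpposite.op_mul, ← mul_assoc, h.mul_mul_of_adjacent hi hj hij]
  commute hij hj := (h.commute hij hj).op

variable {K A : Type*} [Field K] [Ring A] [Algebra K A] {δ : K} {N m : ℕ} {e : ℕ → A}

lemma commute_jonesWenzl (h : IsTemperleyLieb δ N e) (hm : m + 1 < N) :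
    Commute (e (m + 1)) (jonesWenzl δ e m) :=
  commute_jonesWenzl_of_forall fun _ hi => (h.commute (by lia) hm).symm

lemma mul_jonesWenzl_succ_mul (h : IsTemperleyLieb δ N e) (hm : m + 1 < N)
    (hδ : quantumInt δ (m + 2) ≠ 0) (hp : IsIdempotentElem (jonesWenzl δ e m)) :
    e (m + 1) * jonesWenzl δ e (m + 1) * e (m + 1) =
      (quantumInt δ (m + 3) / quantumInt δ (m + 2)) • (e (m + 1) * jonesWenzl δ e m) := by
  have hcomm := h.commute_jonesWenzl hm
  set p := jonesWenzl δ e m with hp_def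
  have hloop : e (m + 1) * p * e (m + 1) = δ • (e (m + 1) * p) := by
    rw [mul_assoc, ← hcomm.eq, ← mul_assoc, h.mul_self hm, smul_mul_assoc]
  have hstraighten : e (m + 1) * (p * e m * p) * e (m + 1) = e (m + 1) * p := by
    calc e (m + 1) * (p * e m * p) * e (m + 1)
        = (e (m + 1) * p) * e m * (p * e (m + 1)) := by simp only [mul_assoc]
      _ = (p * e (m + 1)) * e m * (e (m + 1) * p) := by rw [hcomm.eq]
      _ = p * (e (m + 1) * e m * e (m + 1)) * p := by simp only [mul_assoc]
      _ = e (m + 1) * p := by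
        rw [h.mul_mul_of_adjacent hm (by lia) (.inr rfl), ← hcomm.eq, mul_assoc, hp.eq]
  have hcoeff : δ - quantumInt δ (m + 1) / quantumInt δ (m + 2) =
      quantumInt δ (m + 3) / quantumInt δ (m + 2) := by
    rw [quantumInt_add_two δ (m + 1), sub_div, mul_div_cancel_right₀ _ hδ]
  rw [jonesWenzl_succ, ← hp_def, mul_sub, sub_mul, mul_smul_comm, smul_mul_assoc, hloop,
    hstraighten, ← sub_smul, hcoeff]

lemma mul_jonesWenzl_mul_mul_jonesWenzl (h : IsTemperleyLieb δ N e) (hm : m < N)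
    (hδ : quantumInt δ (m + 1) ≠ 0) (hp : ∀ k ≤ m, IsIdempotentElem (jonesWenzl δ e k)) :
    e m * jonesWenzl δ e m * e m * jonesWenzl δ e m =
      (quantumInt δ (m + 2) / quantumInt δ (m + 1)) • (e m * jonesWenzl δ e m) := by
  cases m with
  | zero => simp [quantumInt_add_two, h.mul_self hm]
  | succ m =>
    rw [h.mul_jonesWenzl_succ_mul hm hδ (hp m m.le_succ), smul_mul_assoc, mul_assoc,
      jonesWenzl_mul_jonesWenzl_succ (hp m m.le_succ)]

lemma isIdempotentElem_jonesWenzl (h : IsTemperleyLieb δ N e)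
    (hδ : ∀ k ≤ N, quantumInt δ (k + 1) ≠ 0) (hm : m ≤ N) :
    IsIdempotentElem (jonesWenzl δ e m) := by
  induction m using Nat.strong_induction_on with
  | _ m ih =>
  cases m with
  | zero => exact IsIdempotentElem.one
  | succ m =>
    have hp : ∀ k ≤ m, IsIdempotentElem (jonesWenzl δ e k) := fun k hk => ih k (by lia) (by lia)
    rw [jonesWenzl_succ]
    exact isIdempotentElem_sub_smul_mul_mul (hp m le_rfl)
      (h.mul_jonesWenzl_mul_mul_jonesWenzl hm (hδ m (by lia)) hp)
      ((div_mul_div_cancel₀ (hδ (m + 1) hm)).trans (div_self (hδ m (by lia))))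

lemma mul_jonesWenzl_eq_zero (h : IsTemperleyLieb δ N e)
    (hδ : ∀ k ≤ N, quantumInt δ (k + 1) ≠ 0) (hm : m ≤ N) {i : ℕ} (hi : i < m) :
    e i * jonesWenzl δ e m = 0 := by
  induction m with
  | zero => simp at hi
  | succ m ih =>
    rcases Nat.lt_succ_iff_lt_or_eq.1 hi with hlt | rfl
    · have hp := h.isIdempotentElem_jonesWenzl hδ (m := m) (by lia)
      rw [← jonesWenzl_mul_jonesWenzl_succ hp, ← mul_assoc, ih (by lia) hlt, zero_mul]
    · have hδ₁ := hδ i (by lia)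
      have hδ₂ := hδ (i + 1) hm
      have hpe := h.mul_jonesWenzl_mul_mul_jonesWenzl hm hδ₁
        fun k hk => h.isIdempotentElem_jonesWenzl hδ (by lia)
      rw [jonesWenzl_succ, mul_sub, mul_smul_comm, ← mul_assoc, ← mul_assoc, hpe, smul_smul,
        div_mul_div_cancel₀ hδ₂, div_self hδ₁, one_smul, sub_self]

lemma jonesWenzl_mul_eq_zero (h : IsTemperleyLieb δ N e)
    (hδ : ∀ k ≤ N, quantumInt δ (k + 1) ≠ 0) (hm : m ≤ N) {i : ℕ} (hi : i < m) :
    jonesWenzl δ e m * e i = 0 :=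
  MulOpposite.op_injective <| by
    simpa [op_jonesWenzl] using h.op.mul_jonesWenzl_eq_zero hδ hm hi

theorem isJonesWenzl_jonesWenzl (h : IsTemperleyLieb δ N e)
    (hδ : ∀ k ≤ N, quantumInt δ (k + 1) ≠ 0) {M : Type*} [AddCommGroup M] [Module K M] [Module A M]
    [IsScalarTower K A M] {v : M} (hv : v ≠ 0) (hev : ∀ i < N, e i • v = 0) :
    IsJonesWenzl K (e '' Set.Iio N) (jonesWenzl δ e N) where
  mem_adjoin := jonesWenzl_mem fun _ hi => Algebra.subset_adjoin (Set.mem_image_of_mem e hi)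
  isIdempotentElem := h.isIdempotentElem_jonesWenzl hδ le_rfl
  ne_zero hzero := hv <| by rw [← jonesWenzl_smul_eq_self (δ := δ) hev, hzero, zero_smul]
  gen_mul := by
    rintro _ ⟨i, hi, rfl⟩
    exact h.mul_jonesWenzl_eq_zero hδ le_rfl hi
  mul_gen := by
    rintro _ ⟨i, hi, rfl⟩
    exact h.jonesWenzl_mul_eq_zero hδ le_rfl hi

end IsTemperleyLieb

end TemperleyLieb

section CupCap

open scoped Matrix

variable {ι α R : Type*} [DecidableEq ι] [Fintype α] [CommRing R]

/-- The cap: contraction of the tensor factors at `x` and `y` against the bilinear form `M`. The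
contracted tensor is kept as a function on all of `ι → α`, constant in the coordinates at `x` and
`y`. -/
def cap (M : Matrix α α R) (x y : ι) (f : (ι → α) → R) (u : ι → α) : R :=
  ∑ a, ∑ b, M a b * f (Function.update (Function.update u x a) y b)

/-- The cup-cap operator on `(R^α)^{⊗ι}`: contract the tensor factors at `x` and `y` against `M`,
then insert the tensor `H` in their place. -/
def cupCap (H M : Matrix α α R) (x y : ι) : Module.End R ((ι → α) → R) where
  toFun f u := H (u x) (u y) * cap M x y f u
  map_add' f g := by
    ext u
    simp [cap, mul_add, Finset.sum_add_distrib]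
  map_smul' r f := by
    ext u
    simp only [cap, Pi.smul_apply, smul_eq_mul, RingHom.id_apply, Finset.mul_sum]
    exact Finset.sum_congr rfl fun a _ => Finset.sum_congr rfl fun b _ => by ring

lemma cupCap_apply (H M : Matrix α α R) (x y : ι) (f : (ι → α) → R) (u : ι → α) :
    cupCap H M x y f u = H (u x) (u y) * cap M x y f u := rfl

variable {x y z w : ι}

lemma cap_update_left (M : Matrix α α R) (x y : ι) (f : (ι → α) → R) (u : ι → α) (c : α) :
    cap M x y f (Function.update u x c) = cap M x y f u := by
  simp only [cap, Function.update_idem]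

lemma cap_swap (M : Matrix α α R) (hxy : x ≠ y) : cap M x y = cap Mᵀ y x := by
  ext f u
  simp only [cap, Matrix.transpose_apply, Function.update_comm hxy]
  exact Finset.sum_comm

lemma cupCap_swap (H M : Matrix α α R) (hxy : x ≠ y) :
    cupCap H M x y = cupCap Hᵀ Mᵀ y x := by
  ext f u
  simp [cupCap_apply, cap_swap M hxy]

lemma cap_update_right (M : Matrix α α R) (hxy : x ≠ y) (f : (ι → α) → R) (u : ι → α) (c : α) :
    cap M x y f (Function.update u y c) = cap M x y f u := by
  rw [cap_swap M hxy, cap_update_left]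

lemma cupCap_mul_self (H M : Matrix α α R) (hxy : x ≠ y) :
    cupCap H M x y * cupCap H M x y = (∑ a, ∑ b, M a b * H a b) • cupCap H M x y := by
  refine LinearMap.ext fun f => funext fun u => ?_
  have hloop : cap M x y (cupCap H M x y f) u = (∑ a, ∑ b, M a b * H a b) * cap M x y f u := by
    rw [cap]
    simp only [cupCap_apply, cap_update_left, cap_update_right M hxy, Function.update_self,
      Function.update_of_ne hxy, ← mul_assoc, Finset.sum_mul]
  simp only [Module.End.mul_apply, cupCap_apply, hloop, LinearMap.smul_apply, Pi.smul_apply,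
    smul_eq_mul]
  ring

lemma cap_comm (M M' : Matrix α α R) (hxz : x ≠ z) (hxw : x ≠ w) (hyz : y ≠ z) (hyw : y ≠ w)
    (f : (ι → α) → R) : cap M x y (cap M' z w f) = cap M' z w (cap M x y f) := by
  ext u
  have hupdate (a b c d : α) :
      Function.update (Function.update (Function.update (Function.update u x a) y b) z c) w d =
      Function.update (Function.update (Function.update (Function.update u z c) w d) x a) y b := by
    rw [Function.update_comm hyz, Function.update_comm hyw, Function.update_comm hxz,
      Function.update_comm hxw]
  simp only [cap, ← Fintype.sum_prod_type', hupdate]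
  simp only [Finset.mul_sum]
  rw [Finset.sum_comm]
  simp only [mul_left_comm]

lemma cap_cupCap_of_disjoint (H M M' : Matrix α α R) (hxz : x ≠ z) (hxw : x ≠ w) (hyz : y ≠ z)
    (hyw : y ≠ w) (f : (ι → α) → R) (u : ι → α) :
    cap M x y (cupCap H M' z w f) u = H (u z) (u w) * cap M x y (cap M' z w f) u := by
  simp only [cap, cupCap_apply, Function.update_of_ne hxz.symm,
    Function.update_of_ne hxw.symm, Function.update_of_ne hyz.symm, Function.update_of_ne hyw.symm,
    Finset.mul_sum, mul_left_comm]

lemma commute_cupCap (H M H' M' : Matrix α α R) (hxz : x ≠ z) (hxw : x ≠ w) (hyz : y ≠ z)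
    (hyw : y ≠ w) : Commute (cupCap H M x y) (cupCap H' M' z w) := by
  refine LinearMap.ext fun f => funext fun u => ?_
  simp only [Module.End.mul_apply]
  rw [cupCap_apply, cap_cupCap_of_disjoint H' M M' hxz hxw hyz hyw, cupCap_apply,
    cap_cupCap_of_disjoint H M' M hxz.symm hyz.symm hxw.symm hyw.symm,
    cap_comm M M' hxz hxw hyz hyw, mul_left_comm]

lemma cap_left_cupCap_right [DecidableEq α] {H M : Matrix α α R} (hMH : M * H = 1)
    (hxz : x ≠ z) (hyz : y ≠ z) (f : (ι → α) → R) (u : ι → α) :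
    cap M x y (cupCap H M y z f) u = cap M y z f (Function.update u x (u z)) := by
  calc cap M x y (cupCap H M y z f) u
      = ∑ a, (M * H) a (u z) * cap M y z f (Function.update u x a) := by
        rw [cap]
        simp only [cupCap_apply, cap_update_left, Function.update_self,
          Function.update_of_ne hxz.symm, Function.update_of_ne hyz.symm, Matrix.mul_apply,
          Finset.sum_mul, mul_assoc]
    _ = cap M y z f (Function.update u x (u z)) := by
        simp [hMH, Matrix.one_apply]

lemma cap_right_cupCap_left [DecidableEq α] {H M : Matrix α α R} (hMH : M * H = 1) (hxy : x ≠ y)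
    (hxz : x ≠ z) (hyz : y ≠ z) (f : (ι → α) → R) (u : ι → α) :
    cap M y z (cupCap H M x y f) u = cap M x y f (Function.update u z (u x)) := by
  have hHM : Mᵀ * Hᵀ = 1 := by
    rw [← Matrix.transpose_mul, mul_eq_one_comm.1 hMH, Matrix.transpose_one]
  rw [cap_swap M hyz, cupCap_swap H M hxy, cap_left_cupCap_right hHM hxz.symm hxy.symm,
    ← cap_swap M hxy]

lemma cupCap_left_mul_right_mul_left [DecidableEq α] {H M : Matrix α α R} (hMH : M * H = 1)
    (hxy : x ≠ y) (hxz : x ≠ z) (hyz : y ≠ z) :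
    cupCap H M x y * cupCap H M y z * cupCap H M x y = cupCap H M x y := by
  refine LinearMap.ext fun f => funext fun u => ?_
  simp only [Module.End.mul_apply]
  rw [cupCap_apply, cap_left_cupCap_right hMH hxz hyz, cap_right_cupCap_left hMH hxy hxz hyz,
    Function.update_self, cupCap_apply, Function.update_comm hxz, Function.update_eq_self,
    cap_update_left]

lemma cupCap_right_mul_left_mul_right [DecidableEq α] {H M : Matrix α α R} (hMH : M * H = 1)
    (hxy : x ≠ y) (hxz : x ≠ z) (hyz : y ≠ z) :
    cupCap H M y z * cupCap H M x y * cupCap H M y z = cupCap H M y z := by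
  have hHM : Mᵀ * Hᵀ = 1 := by
    rw [← Matrix.transpose_mul, mul_eq_one_comm.1 hMH, Matrix.transpose_one]
  rw [cupCap_swap H M hxy, cupCap_swap H M hyz,
    cupCap_left_mul_right_mul_left hHM hyz.symm hxz.symm hxy.symm]

lemma cupCap_single_const [Fintype ι] [DecidableEq α] (H : Matrix α α R) {M : Matrix α α R} {a : α}
    (hM : M a a = 0) (hxy : x ≠ y) :
    cupCap H M x y (Pi.single (Function.const ι a) 1) = 0 := by
  ext u
  rw [cupCap_apply, cap, Finset.sum_eq_zero, mul_zero, Pi.zero_apply]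
  refine fun b _ => Finset.sum_eq_zero fun c _ => ?_
  rw [Pi.single_apply]
  split_ifs with hconst
  · have hb : b = a := by simpa [hxy] using congrFun hconst x
    have hc : c = a := by simpa using congrFun hconst y
    rw [hb, hc, hM, zero_mul]
  · exact mul_zero _

end CupCap

section Generators

lemma TLE_eq_cupCap (t : ℂ) (n i : ℕ) (h : i + 1 < n) :
    TLE t n i h = cupCap (Matrix.of (etaC t)) (Matrix.of (muC t))
      ⟨i, Nat.lt_of_succ_lt h⟩ ⟨i + 1, h⟩ := by
  ext f u
  simp [TLE, ptwiseMul, cupCap, cap, LinearMap.funLeft]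

lemma sum_muC_mul_etaC (t : ℂ) :
    ∑ a, ∑ b, Matrix.of (muC t) a b * Matrix.of (etaC t) a b = -(t ^ 2) + (-(t ^ 2))⁻¹ := by
  have hI : I * t * (I * t) + I * t⁻¹ * (I * t⁻¹) = -(t ^ 2) + (-(t ^ 2))⁻¹ := by
    linear_combination (t ^ 2 + t⁻¹ ^ 2) * I_mul_I
  simpa [Fin.sum_univ_two, muC, etaC] using hI

lemma muC_mul_etaC {t : ℂ} (ht : t ≠ 0) : Matrix.of (muC t) * Matrix.of (etaC t) = 1 := by
  have hI : -(I * t * (I * t⁻¹)) = 1 := by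
    rw [mul_mul_mul_comm, I_mul_I, mul_inv_cancel₀ ht, mul_one, neg_neg]
  simp [← Matrix.ext_iff, Fin.forall_fin_two, muC, etaC, hI, mul_comm (I * t⁻¹)]

/-- The generators `E₁, …, E_{n−1}` as a `0`-indexed sequence, padded with zeros. -/
def tlGen (t : ℂ) (n i : ℕ) : Module.End ℂ (Vn n) :=
  if h : i + 1 < n then TLE t n i h else 0

variable {t : ℂ} {n : ℕ}

lemma tlGen_eq_TLE {i : ℕ} (h : i + 1 < n) : tlGen t n i = TLE t n i h := dif_pos h

lemma tlGen_eq_cupCap {i : ℕ} (h : i + 1 < n) :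
    tlGen t n i = cupCap (Matrix.of (etaC t)) (Matrix.of (muC t))
      ⟨i, Nat.lt_of_succ_lt h⟩ ⟨i + 1, h⟩ := by
  rw [tlGen_eq_TLE h, TLE_eq_cupCap]

lemma setOf_TLE_eq_image_tlGen :
    {g | ∃ (i : ℕ) (h : i + 1 < n), g = TLE t n i h} = tlGen t n '' Set.Iio (n - 1) := by
  ext g
  constructor
  · rintro ⟨i, h, rfl⟩
    exact ⟨i, Nat.lt_sub_of_add_lt h, tlGen_eq_TLE h⟩
  · rintro ⟨i, hi, rfl⟩
    have h : i + 1 < n := Nat.add_lt_of_lt_sub hi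
    exact ⟨i, h, tlGen_eq_TLE h⟩

lemma isTemperleyLieb_tlGen (ht : t ≠ 0) (n : ℕ) :
    IsTemperleyLieb (-(t ^ 2) + (-(t ^ 2))⁻¹) (n - 1) (tlGen t n) where
  mul_self hi := by
    rw [tlGen_eq_cupCap (by lia), cupCap_mul_self _ _ (by simp), sum_muC_mul_etaC]
  mul_mul_of_adjacent := by
    rintro i j hi hj (rfl | rfl)
    · rw [tlGen_eq_cupCap (i := i) (by lia), tlGen_eq_cupCap (i := i + 1) (by lia)]
      exact cupCap_left_mul_right_mul_left (muC_mul_etaC ht) (by simp)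
        (Fin.ne_of_lt (Nat.lt_add_of_pos_right two_pos)) (by simp)
    · rw [tlGen_eq_cupCap (i := j) (by lia), tlGen_eq_cupCap (i := j + 1) (by lia)]
      exact cupCap_right_mul_left_mul_right (muC_mul_etaC ht) (by simp)
        (Fin.ne_of_lt (Nat.lt_add_of_pos_right two_pos)) (by simp)
  commute hij hj := by
    rw [tlGen_eq_cupCap (by lia), tlGen_eq_cupCap (by lia)]
    apply commute_cupCap <;> rw [Ne, Fin.mk.injEq] <;> lia

lemma tlGen_single_const_zero {i : ℕ} (h : i + 1 < n) :
    tlGen t n i (Pi.single (Function.const (Fin n) 0) 1) = 0 := by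
  rw [tlGen_eq_cupCap h]
  exact cupCap_single_const _ (by simp [muC]) (by simp)

lemma isJonesWenzl_setOf_TLE_iff {f : Module.End ℂ (Vn n)} :
    IsJonesWenzl ℂ {g | ∃ (i : ℕ) (h : i + 1 < n), g = TLE t n i h} f ↔
      f ∈ Algebra.adjoin ℂ {g | ∃ (i : ℕ) (h : i + 1 < n), g = TLE t n i h} ∧
        f * f = f ∧ f ≠ 0 ∧
          ∀ (i : ℕ) (h : i + 1 < n), TLE t n i h * f = 0 ∧ f * TLE t n i h = 0 where
  mp hf := ⟨hf.mem_adjoin, hf.isIdempotentElem, hf.ne_zero,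
    fun i h => ⟨hf.gen_mul ⟨i, h, rfl⟩, hf.mul_gen ⟨i, h, rfl⟩⟩⟩
  mpr := fun ⟨hmem, hidem, hne, hkill⟩ => ⟨hmem, hidem, hne,
    by rintro _ ⟨i, h, rfl⟩; exact (hkill i h).1, by rintro _ ⟨i, h, rfl⟩; exact (hkill i h).2⟩

lemma quantumInt_ne_zero_of_geom_sum_ne_zero (ht : t ≠ 0) {k : ℕ}
    (hk : ∑ j ∈ Finset.range (k + 1), (t ^ 4) ^ j ≠ 0) :
    quantumInt (-(t ^ 2) + (-(t ^ 2))⁻¹) (k + 1) ≠ 0 := by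
  have hq : -(t ^ 2) ≠ 0 := neg_ne_zero.2 (pow_ne_zero 2 ht)
  have hgeom := pow_mul_quantumInt_add_eq_geom_sum (mul_inv_cancel₀ hq) k
  rw [show (-(t ^ 2)) ^ 2 = t ^ 4 by ring] at hgeom
  exact right_ne_zero_of_mul (hgeom.trans_ne hk)

end Generators

-- The geometric sum is `t ^ (2 * (k - 1)) * [k]`, free of the `0 / 0` in `qint` at `t ^ 4 = 1`.
theorem stmt11_general (t : ℂ) (ht : t ≠ 0) (n : ℕ)
    (hquantum : ∀ k, 0 < k → k ≤ n → ∑ j ∈ Finset.range k, (t ^ 4) ^ j ≠ 0) :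
    ∃! f : Module.End ℂ (Vn n),
      f ∈ Algebra.adjoin ℂ
          {g : Module.End ℂ (Vn n) | ∃ (i : ℕ) (h : i + 1 < n), g = TLE t n i h} ∧
      f * f = f ∧ f ≠ 0 ∧
      ∀ (i : ℕ) (h : i + 1 < n), TLE t n i h * f = 0 ∧ f * TLE t n i h = 0 := by
  simp_rw [← isJonesWenzl_setOf_TLE_iff, setOf_TLE_eq_image_tlGen]
  have hδ : ∀ k ≤ n - 1, quantumInt (-(t ^ 2) + (-(t ^ 2))⁻¹) (k + 1) ≠ 0 := by
    intro k hk
    refine quantumInt_ne_zero_of_geom_sum_ne_zero ht ?_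
    rcases k.eq_zero_or_pos with rfl | hpos
    · simp
    · exact hquantum (k + 1) k.succ_pos (by lia)
  have hjw := (isTemperleyLieb_tlGen ht n).isJonesWenzl_jonesWenzl hδ
    (v := (Pi.single (Function.const (Fin n) 0) 1 : Vn n)) (by simp)
    fun i hi => tlGen_single_const_zero (by lia)
  exact ⟨_, hjw, fun _ hf => hf.unique hjw⟩

/-- For every `n ≥ 1` there exists a unique `f ∈ End((ℂ²)^{⊗n})` which
lies in the unital subalgebra generated by `E_1, …, E_{n−1}`, is a nonzero idempotent,
and kills all the `E_i` on both sides: the Jones–Wenzl idempotent `f_n`. -/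
theorem stmt11 (t : ℂ) (ht : t ≠ 0) (hroot : ∀ k : ℕ, 0 < k → t ^ k ≠ 1) (n : ℕ)
    (hn : 1 ≤ n) :
    ∃! f : Module.End ℂ (Vn n),
      f ∈ Algebra.adjoin ℂ
          {g : Module.End ℂ (Vn n) | ∃ (i : ℕ) (h : i + 1 < n), g = TLE t n i h} ∧
      f * f = f ∧ f ≠ 0 ∧
      ∀ (i : ℕ) (h : i + 1 < n), TLE t n i h * f = 0 ∧ f * TLE t n i h = 0 :=
  stmt11_general t ht n fun k hk _ h => hroot (4 * k) (by lia) <| by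
    rw [pow_mul, ← sub_eq_zero, ← geom_sum_mul, h, zero_mul]

end
end

section
/- For every n ≥ 1, the image f_n((ℂ²)^{⊗n}) of the Jones–Wenzl idempotent f_n is an A_t-submodule of 1̲^{⊗n} of dimension n+1, isomorphic as an A_t-module to the irreducible module n̲; that is, f_n is the projection of 1̲^{⊗n} onto its highest weight irreducible summand. -/
open scoped TensorProduct
open Complex

noncomputable section

/-- Diagonal entries of `ρ₁(K) = diag(t, t⁻¹)` on the basis `e₀ = e_{1/2}`, `e₁ = e_{−1/2}`. -/
def kD (t : ℂ) : Fin 2 → ℂ := ![t, t⁻¹]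
/-- Diagonal entries of `ρ₁(K⁻¹) = diag(t⁻¹, t)`. -/
def kD' (t : ℂ) : Fin 2 → ℂ := ![t⁻¹, t]

/-- Action of `K` on `1̲^{⊗n}` (via the iterated coproduct `Δ^{(n−1)}K = K^{⊗n}`). -/
def piK (t : ℂ) (n : ℕ) : Module.End ℂ (Vn n) :=
  ptwiseMul fun u => ∏ k : Fin n, kD t (u k)

/-- Action of `K⁻¹` on `1̲^{⊗n}`. -/
def piK' (t : ℂ) (n : ℕ) : Module.End ℂ (Vn n) :=
  ptwiseMul fun u => ∏ k : Fin n, kD' t (u k)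

/-- Action of `X` on `1̲^{⊗n}` (via `Δ^{(n−1)}X = ∑_i (K⁻¹)^{⊗i} ⊗ X ⊗ K^{⊗(n−1−i)}`;
recall `ρ₁(X)e₁ = e₀`, `ρ₁(X)e₀ = 0`). -/
def piX (t : ℂ) (n : ℕ) : Module.End ℂ (Vn n) :=
  ∑ i : Fin n,
    (ptwiseMul fun u => (if u i = 0 then 1 else 0) *
        (∏ k ∈ Finset.univ.filter (fun k => k < i), kD' t (u k)) *
        (∏ k ∈ Finset.univ.filter (fun k => i < k), kD t (u k))) ∘ₗ
      LinearMap.funLeft ℂ ℂ (fun u => Function.update u i 1)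

/-- Action of `Y` on `1̲^{⊗n}` (via `Δ^{(n−1)}Y = ∑_i (K⁻¹)^{⊗i} ⊗ Y ⊗ K^{⊗(n−1−i)}`;
recall `ρ₁(Y)e₀ = e₁`, `ρ₁(Y)e₁ = 0`). -/
def piY (t : ℂ) (n : ℕ) : Module.End ℂ (Vn n) :=
  ∑ i : Fin n,
    (ptwiseMul fun u => (if u i = 1 then 1 else 0) *
        (∏ k ∈ Finset.univ.filter (fun k => k < i), kD' t (u k)) *
        (∏ k ∈ Finset.univ.filter (fun k => i < k), kD t (u k))) ∘ₗ
      LinearMap.funLeft ℂ ℂ (fun u => Function.update u i 0)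

/-- `π` is the representation of `Aₜ` on the `n`-fold tensor power `1̲^{⊗n}` obtained
from `ρ₁` via the iterated comultiplication. -/
def IsPi (t : ℂ) (n : ℕ) (π : At t →ₐ[ℂ] Module.End ℂ (Vn n)) : Prop :=
  π (aX t) = piX t n ∧ π (aY t) = piY t n ∧ π (aK t) = piK t n ∧ π (aK' t) = piK' t n

/-!
A polynomial in the `E_i` acts on their joint kernel through its constant term, so the range of the
idempotent `f`, which every `E_i` kills, is the whole joint kernel. In coordinates `E_i w = 0` says
that exchanging adjacent entries `0, 1` of a multi-index `u` multiplies `w u` by `t²`. Dividing by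
the weight `t ^ Σ_k u_k (n − 1 − 2k)` turns this into invariance under permutations, so the joint
kernel has as basis the `q`-symmetric vectors `s_0, …, s_n`, where `s_j` is the weighted sum of the
basis vectors with `j` factors `e_{−1/2}`.

The coefficients of `Y s_j` and `X s_j` are sums over the positions `i` of the ones (respectively
zeros) of `u`, with summands `t ^ (±2 (b_i − a_i))`, where `b_i` of these positions precede `i` and
`a_i` follow it; such sums are quantum integers. Hence `Y s_j = [j + 1] s_{j+1}` and
`X s_{j+1} = [n − j] s_j`, and rescaling `s_j` by the inverse Gaussian binomial coefficient gives
the formulas for `n̲`.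
-/

open Finset Function Equiv

section LinearAlgebra

open Module (End)

theorem exists_forall_apply_eq_smul_of_mem_adjoin {R M : Type*} [CommSemiring R]
    [AddCommMonoid M] [Module R M] {S : Set (End R M)} {g : End R M}
    (hg : g ∈ Algebra.adjoin R S) : ∃ c : R, ∀ w, (∀ s ∈ S, s w = 0) → g w = c • w := by
  induction hg using Algebra.adjoin_induction with
  | mem s hs => exact ⟨0, fun w hw => by rw [hw s hs, zero_smul]⟩
  | algebraMap r => exact ⟨r, fun w _ => Module.algebraMap_end_apply R R M r w⟩
  | add a b _ _ ha hb =>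
    obtain ⟨c, hc⟩ := ha
    obtain ⟨d, hd⟩ := hb
    exact ⟨c + d, fun w hw => by rw [LinearMap.add_apply, hc w hw, hd w hw, add_smul]⟩
  | mul a b _ _ ha hb =>
    obtain ⟨c, hc⟩ := ha
    obtain ⟨d, hd⟩ := hb
    exact ⟨c * d, fun w hw => by
      rw [Module.End.mul_apply, hd w hw, map_smul, hc w hw, smul_comm, mul_smul]⟩

theorem mem_range_idempotent_of_mem_adjoin_iff {R M : Type*} [CommRing R] [IsDomain R]
    [AddCommGroup M] [Module R M] [Module.IsTorsionFree R M] {S : Set (End R M)} {f : End R M}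
    (hf : f ∈ Algebra.adjoin R S) (hidem : f * f = f) (hne : f ≠ 0)
    (hkill : ∀ s ∈ S, s * f = 0) {w : M} :
    w ∈ LinearMap.range f ↔ ∀ s ∈ S, s w = 0 := by
  have killed_apply (v : M) : ∀ s ∈ S, s (f v) = 0 := fun s hs => LinearMap.congr_fun (hkill s hs) v
  obtain ⟨c, hc⟩ := exists_forall_apply_eq_smul_of_mem_adjoin hf
  obtain ⟨v, hv⟩ := DFunLike.ne_iff.mp hne
  have c_eq_one : c = 1 := by
    refine smul_left_injective R hv (?_ : c • f v = (1 : R) • f v)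
    rw [← hc _ (killed_apply v), ← Module.End.mul_apply, hidem, one_smul]
  constructor
  · rintro ⟨v, rfl⟩
    exact killed_apply v
  · intro hw
    exact ⟨w, by rw [hc w hw, c_eq_one, one_smul]⟩

theorem intertwines_of_adjoin_eq_top {R A M N : Type*} [CommSemiring R] [Semiring A] [Algebra R A]
    [AddCommMonoid M] [Module R M] [AddCommMonoid N] [Module R N] {S : Set A}
    (hS : Algebra.adjoin R S = ⊤) (π : A →ₐ[R] End R M) (ρ : A →ₐ[R] End R N) (φ : N →ₗ[R] M)
    (h : ∀ a ∈ S, ∀ x, π a (φ x) = φ (ρ a x)) (a : A) (x : N) : π a (φ x) = φ (ρ a x) := by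
  have ha : a ∈ Algebra.adjoin R S := hS ▸ Algebra.mem_top
  induction ha using Algebra.adjoin_induction generalizing x with
  | mem a ha => exact h a ha x
  | algebraMap r => simp only [AlgHom.commutes, Module.algebraMap_end_apply, map_smul]
  | add a b _ _ ha hb => simp only [map_add, LinearMap.add_apply, ha, hb]
  | mul a b _ _ ha hb => simp only [map_mul, Module.End.mul_apply, ha, hb]

end LinearAlgebra

section Combinatorics

theorem sum_card_lt_card_gt {α M : Type*} [LinearOrder α] [AddCommMonoid M] (s : Finset α)
    (F : ℕ → ℕ → M) :
    ∑ i ∈ s, F #{k ∈ s | k < i} #{k ∈ s | i < k} = ∑ r ∈ range #s, F r (#s - 1 - r) := by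
  induction s using Finset.induction_on_max generalizing F with
  | empty => simp
  | insert a s hs ih =>
    have ha : a ∉ s := fun h => (hs a h).false
    have below_a : #{k ∈ insert a s | k < a} = #s := by
      rw [filter_insert, if_neg (lt_irrefl a), filter_true_of_mem hs]
    have above_a : #{k ∈ insert a s | a < k} = 0 := by
      rw [filter_insert, if_neg (lt_irrefl a), filter_false_of_mem fun k hk => (hs k hk).not_gt,
        card_empty]
    have below {i : α} (hi : i ∈ s) : #{k ∈ insert a s | k < i} = #{k ∈ s | k < i} := by
      rw [filter_insert, if_neg (hs i hi).not_gt]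
    have above {i : α} (hi : i ∈ s) : #{k ∈ insert a s | i < k} = #{k ∈ s | i < k} + 1 := by
      rw [filter_insert, if_pos (hs i hi), card_insert_of_notMem (by simp [ha])]
    rw [sum_insert ha, below_a, above_a, card_insert_of_notMem ha, sum_range_succ, add_comm,
      sum_congr rfl fun i hi => by rw [below hi, above hi], ih fun r q => F r (q + 1)]
    congr 1
    · refine sum_congr rfl fun r hr => ?_
      congr 1
      have := mem_range.mp hr
      lia
    · simp

theorem sum_apply_update {ι β M : Type*} [Fintype ι] [DecidableEq ι] [AddCommMonoid M]
    (g : ι → β → M) (u : ι → β) (i : ι) (b : β) :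
    ∑ k, g k (update u i b k) + g i (u i) = ∑ k, g k (u k) + g i b := by
  simp only [apply_update]
  rw [sum_update_of_mem (mem_univ i), sdiff_singleton_eq_erase, add_assoc,
    sum_erase_add _ _ (mem_univ i), add_comm]

theorem update_update_comp_swap {ι β : Type*} [DecidableEq ι] {i j : ι} (hij : i ≠ j) (u : ι → β)
    (a b : β) : update (update u i a) j b ∘ swap i j = update (update u i b) j a := by
  rw [comp_swap_eq_update, update_self, update_of_ne hij, update_self, update_idem,
    update_comm hij, update_idem, update_comm hij]

theorem comp_perm_eq_of_comp_adjacent_swap_eq {β γ : Type*} {n : ℕ} {h : (Fin (n + 1) → β) → γ}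
    (hswap : ∀ u (i : Fin n), h (u ∘ swap i.castSucc i.succ) = h u) (σ : Perm (Fin (n + 1)))
    (u : Fin (n + 1) → β) : h (u ∘ σ) = h u := by
  have hσ : σ ∈ Submonoid.closure (Set.range fun i : Fin n => swap i.castSucc i.succ) := by
    rw [Perm.mclosure_swap_castSucc_succ]
    exact Submonoid.mem_top σ
  induction hσ using Submonoid.closure_induction generalizing u with
  | mem _ hx =>
    obtain ⟨i, rfl⟩ := hx
    exact hswap u i
  | one => rfl
  | mul σ τ _ _ hσ hτ => rw [Perm.coe_mul, ← comp_assoc, hτ, hσ]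

end Combinatorics

section NumOnes

variable {n : ℕ}

/-- The number of tensor factors `e_{−1/2}` in the basis vector `e_u` of `1̲^{⊗n}`. Thus `e_u` has
weight `t ^ (n − 2 * numOnes u)`. -/
def numOnes (u : Fin n → Fin 2) : ℕ := ∑ k, (u k : ℕ)

theorem card_eq_one_eq_numOnes (u : Fin n → Fin 2) : #{k | u k = 1} = numOnes u := by
  rw [card_filter]
  refine sum_congr rfl fun k _ => ?_
  generalize u k = a
  fin_cases a <;> rfl

theorem card_eq_zero_add_numOnes (u : Fin n → Fin 2) : #{k | u k = 0} + numOnes u = n := by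
  have hne : ∀ k, ¬u k = 0 ↔ u k = 1 := by lia
  simpa only [hne, card_eq_one_eq_numOnes, card_univ, Fintype.card_fin]
    using card_filter_add_card_filter_not (s := univ) fun k => u k = 0

theorem numOnes_lt_succ (u : Fin n → Fin 2) : numOnes u < n + 1 := by
  have := card_eq_zero_add_numOnes u
  lia

theorem numOnes_update (u : Fin n → Fin 2) (i : Fin n) (a : Fin 2) :
    numOnes (update u i a) + u i = numOnes u + a :=
  sum_apply_update (fun _ (b : Fin 2) => (b : ℕ)) u i a

theorem numOnes_comp_perm (u : Fin n → Fin 2) (σ : Perm (Fin n)) :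
    numOnes (u ∘ σ) = numOnes u := Equiv.sum_comp σ fun k => (u k : ℕ)

theorem exists_numOnes_eq {j : ℕ} (hj : j ≤ n) : ∃ u : Fin n → Fin 2, numOnes u = j := by
  obtain ⟨s, -, hs⟩ := exists_subset_card_eq (s := (univ : Finset (Fin n))) (by simpa using hj)
  exact ⟨fun k => if k ∈ s then 1 else 0, by simp [← card_eq_one_eq_numOnes, hs]⟩

theorem exists_comp_perm_eq {u v : Fin n → Fin 2} (h : numOnes u = numOnes v) :
    ∃ σ : Perm (Fin n), v ∘ σ = u := by
  have hcard : Fintype.card {k // u k = 1} = Fintype.card {k // v k = 1} := by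
    simpa only [Fintype.card_subtype, card_eq_one_eq_numOnes] using h
  let e : {k // u k = 1} ≃ {k // v k = 1} := Fintype.equivOfCardEq hcard
  refine ⟨e.extendSubtype, funext fun k => ?_⟩
  by_cases hk : u k = 1
  · exact (e.extendSubtype_mem k hk).trans hk.symm
  · have := e.extendSubtype_not_mem k hk
    simp only [comp_apply]
    lia

end NumOnes

section QuantumIntegers

variable {t : ℂ}

theorem sq_ne_inv_sq (ht : t ≠ 0) (ht4 : t ^ 4 ≠ 1) : t ^ 2 ≠ t⁻¹ ^ 2 := by
  intro h
  apply ht4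
  field_simp at h
  exact h

theorem qint_natCast_eq_sum (ht : t ≠ 0) (ht4 : t ^ 4 ≠ 1) (m : ℕ) :
    qint t m = ∑ r ∈ range m, (t ^ 2) ^ r * (t⁻¹ ^ 2) ^ (m - 1 - r) := by
  rw [geom₂_sum (sq_ne_inv_sq ht ht4), qint, ← pow_mul, ← pow_mul, inv_pow t (2 * m), zpow_neg]
  norm_cast

theorem sum_card_lt_card_gt_eq_qint {α : Type*} [LinearOrder α] (ht : t ≠ 0) (ht4 : t ^ 4 ≠ 1)
    (s : Finset α) :
    ∑ i ∈ s, (t ^ 2) ^ #{k ∈ s | k < i} * (t⁻¹ ^ 2) ^ #{k ∈ s | i < k} = qint t #s := by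
  rw [qint_natCast_eq_sum ht ht4,
    sum_card_lt_card_gt s fun r q => (t ^ 2) ^ r * (t⁻¹ ^ 2) ^ q]

theorem qint_inv (m : ℤ) : qint t⁻¹ m = qint t m := by
  rw [qint, qint, inv_inv, inv_zpow', inv_zpow', neg_neg, ← neg_sub (t ^ (2 * m)),
    ← neg_sub (t ^ 2), neg_div_neg_eq]

theorem qint_natCast_ne_zero (ht : t ≠ 0) (ht4 : t ^ 4 ≠ 1) {m : ℕ} (hm : t ^ (4 * m) ≠ 1) :
    qint t m ≠ 0 := by
  refine div_ne_zero (sub_ne_zero.mpr fun h => hm ?_) (sub_ne_zero.mpr (sq_ne_inv_sq ht ht4))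
  calc t ^ (4 * m) = t ^ (2 * (m : ℤ)) * t ^ (2 * (m : ℤ)) := by
        rw [← zpow_add₀ ht, ← zpow_natCast]
        congr 1
        lia
    _ = 1 := by
        nth_rw 2 [h]
        rw [← zpow_add₀ ht, add_neg_cancel, zpow_zero]

end QuantumIntegers

section Coproduct

variable {t : ℂ} {n : ℕ}

theorem kD'_eq_kD_inv (t : ℂ) : kD' t = kD t⁻¹ := by
  rw [kD', kD, inv_inv]

theorem kD_rev (t : ℂ) (a : Fin 2) : kD t a.rev = kD t⁻¹ a := by
  fin_cases a <;> simp [kD]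

theorem prod_kD_eq_mul_pow_card_eq_one {ι : Type*} (ht : t ≠ 0) (u : ι → Fin 2) (s : Finset ι) :
    ∏ k ∈ s, kD t (u k) = t ^ #s * (t⁻¹ ^ 2) ^ #{k ∈ s | u k = 1} := by
  have kD_apply : ∀ a, kD t a = t * if a = 1 then t⁻¹ ^ 2 else 1 := by
    intro a
    fin_cases a
    · simp [kD]
    · simp [kD, sq, ht]
  simp only [kD_apply, prod_mul_distrib, prod_const, prod_ite, one_pow, mul_one]

theorem prod_kD_eq_zpow (ht : t ≠ 0) (u : Fin n → Fin 2) :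
    ∏ k, kD t (u k) = t ^ ((n : ℤ) - 2 * numOnes u) := by
  rw [prod_kD_eq_mul_pow_card_eq_one ht, card_univ, Fintype.card_fin, card_eq_one_eq_numOnes,
    ← pow_mul, inv_pow, zpow_sub₀ ht, div_eq_mul_inv]
  norm_cast

/-- The coefficient by which the tensor factors other than the `i`-th contribute to the `i`-th
summand of `Δ^{(n−1)}X` and of `Δ^{(n−1)}Y`: the scalar by which
`(K⁻¹)^{⊗i} ⊗ id ⊗ K^{⊗(n−1−i)}` acts on the basis vector `e_u`. -/
def coprodCoeff (t : ℂ) (u : Fin n → Fin 2) (i : Fin n) : ℂ :=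
  (∏ k with k < i, kD' t (u k)) * ∏ k with i < k, kD t (u k)

theorem piX_apply (t : ℂ) (w : Vn n) (u : Fin n → Fin 2) :
    piX t n w u = ∑ i with u i = 0, coprodCoeff t u i * w (update u i 1) := by
  simp [piX, ptwiseMul, LinearMap.funLeft, coprodCoeff, sum_filter]

theorem piY_apply (t : ℂ) (w : Vn n) (u : Fin n → Fin 2) :
    piY t n w u = ∑ i with u i = 1, coprodCoeff t u i * w (update u i 0) := by
  simp [piY, ptwiseMul, LinearMap.funLeft, coprodCoeff, sum_filter]

theorem coprodCoeff_eq_of_ones (ht : t ≠ 0) (u : Fin n → Fin 2) (i : Fin n) :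
    coprodCoeff t u i = t ^ ((n : ℤ) - 1 - 2 * i) *
      ((t ^ 2) ^ #{k ∈ {k | u k = 1} | k < i} * (t⁻¹ ^ 2) ^ #{k ∈ {k | u k = 1} | i < k}) := by
  have pow_eq : t⁻¹ ^ (i : ℕ) * t ^ (n - 1 - i) = t ^ ((n : ℤ) - 1 - 2 * i) := by
    rw [inv_pow, ← zpow_natCast, ← zpow_natCast, ← zpow_neg, ← zpow_add₀ ht]
    congr 1
    have := i.isLt
    lia
  rw [coprodCoeff, kD'_eq_kD_inv, prod_kD_eq_mul_pow_card_eq_one (inv_ne_zero ht),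
    prod_kD_eq_mul_pow_card_eq_one ht, inv_inv, filter_gt_eq_Iio, filter_lt_eq_Ioi, Fin.card_Iio,
    Fin.card_Ioi, ← pow_eq, ← filter_gt_eq_Iio, ← filter_lt_eq_Ioi, filter_comm,
    filter_comm (fun k => i < k)]
  ring

theorem coprodCoeff_rev_comp (t : ℂ) (u : Fin n → Fin 2) (i : Fin n) :
    coprodCoeff t (Fin.rev ∘ u) i = coprodCoeff t⁻¹ u i := by
  simp only [coprodCoeff, kD'_eq_kD_inv, comp_apply, kD_rev]

theorem coprodCoeff_eq_of_zeros (ht : t ≠ 0) (u : Fin n → Fin 2) (i : Fin n) :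
    coprodCoeff t u i = t⁻¹ ^ ((n : ℤ) - 1 - 2 * i) *
      ((t⁻¹ ^ 2) ^ #{k ∈ {k | u k = 0} | k < i} * (t ^ 2) ^ #{k ∈ {k | u k = 0} | i < k}) := by
  have rev_eq_one : ∀ a : Fin 2, a.rev = 1 ↔ a = 0 := by decide
  have h := coprodCoeff_eq_of_ones (inv_ne_zero ht) (Fin.rev ∘ u) i
  simpa only [coprodCoeff_rev_comp, comp_apply, rev_eq_one, inv_inv] using h

end Coproduct

section QSymmetric

variable {t : ℂ} {n : ℕ}

/-- The `q`-symmetrizing weight of the basis vector `e_u`, namely `t` to the power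
`#{k < l | u k = 1, u l = 0} − #{k < l | u k = 0, u l = 1}`; the exponent is additive over the
positions `k` with `u k = 1`, each of which contributes `n − 1 − 2 * k`. -/
def qWeight (t : ℂ) (u : Fin n → Fin 2) : ℂ := t ^ ∑ k, ((u k : ℕ) : ℤ) * ((n : ℤ) - 1 - 2 * k)

theorem qWeight_ne_zero (ht : t ≠ 0) (u : Fin n → Fin 2) : qWeight t u ≠ 0 := zpow_ne_zero _ ht

theorem qWeight_update (ht : t ≠ 0) (u : Fin n → Fin 2) (i : Fin n) (a : Fin 2) :
    qWeight t (update u i a) * t ^ (((u i : ℕ) : ℤ) * ((n : ℤ) - 1 - 2 * i)) =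
      qWeight t u * t ^ (((a : ℕ) : ℤ) * ((n : ℤ) - 1 - 2 * i)) := by
  rw [qWeight, qWeight, ← zpow_add₀ ht, ← zpow_add₀ ht,
    sum_apply_update fun (k : Fin n) (b : Fin 2) => ((b : ℕ) : ℤ) * ((n : ℤ) - 1 - 2 * k)]

theorem qWeight_comp_adjacent_swap (ht : t ≠ 0) {u : Fin (n + 1) → Fin 2} {i : Fin n}
    (h0 : u i.castSucc = 0) (h1 : u i.succ = 1) :
    qWeight t (u ∘ swap i.castSucc i.succ) = t ^ 2 * qWeight t u := by
  have hne : i.castSucc ≠ i.succ := i.castSucc_lt_succ.ne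
  rw [comp_swap_eq_update, h0, h1]
  have set_zero := qWeight_update ht u i.succ 0
  have set_one := qWeight_update ht (update u i.succ 0) i.castSucc 1
  simp only [update_of_ne hne, h0, h1, Fin.val_zero, Fin.val_one, Fin.val_castSucc, Fin.val_succ,
    Nat.cast_zero, Nat.cast_one, Nat.cast_add, add_sub_cancel_right, zero_mul, one_mul, zpow_zero,
    mul_one] at set_zero set_one
  rw [set_one, ← set_zero, mul_left_comm, ← zpow_natCast, ← zpow_add₀ ht]
  congr 2
  lia

theorem coprodCoeff_mul_qWeight_update_zero (ht : t ≠ 0) {u : Fin n → Fin 2} {i : Fin n}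
    (hi : u i = 1) :
    coprodCoeff t u i * qWeight t (update u i 0) = qWeight t u *
      ((t ^ 2) ^ #{k ∈ {k | u k = 1} | k < i} * (t⁻¹ ^ 2) ^ #{k ∈ {k | u k = 1} | i < k}) := by
  have h := qWeight_update ht u i 0
  simp only [hi, Fin.val_one, Fin.val_zero, Nat.cast_one, Nat.cast_zero, one_mul, zero_mul,
    zpow_zero, mul_one] at h
  rw [coprodCoeff_eq_of_ones ht, ← h]
  ring

theorem coprodCoeff_mul_qWeight_update_one (ht : t ≠ 0) {u : Fin n → Fin 2} {i : Fin n}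
    (hi : u i = 0) :
    coprodCoeff t u i * qWeight t (update u i 1) = qWeight t u *
      ((t⁻¹ ^ 2) ^ #{k ∈ {k | u k = 0} | k < i} * (t ^ 2) ^ #{k ∈ {k | u k = 0} | i < k}) := by
  have h := qWeight_update ht u i 1
  simp only [hi, Fin.val_one, Fin.val_zero, Nat.cast_one, Nat.cast_zero, one_mul, zero_mul,
    zpow_zero, mul_one] at h
  rw [coprodCoeff_eq_of_zeros ht, h, inv_zpow]
  field_simp

theorem sum_coprodCoeff_mul_qWeight_update_zero (ht : t ≠ 0) (ht4 : t ^ 4 ≠ 1)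
    (u : Fin n → Fin 2) :
    ∑ i with u i = 1, coprodCoeff t u i * qWeight t (update u i 0) =
      qint t (numOnes u) * qWeight t u := by
  rw [← card_eq_one_eq_numOnes, ← sum_card_lt_card_gt_eq_qint ht ht4, mul_comm, mul_sum]
  exact sum_congr rfl fun i hi =>
    coprodCoeff_mul_qWeight_update_zero ht (mem_filter.mp hi).2

theorem sum_coprodCoeff_mul_qWeight_update_one (ht : t ≠ 0) (ht4 : t ^ 4 ≠ 1)
    (u : Fin n → Fin 2) :
    ∑ i with u i = 0, coprodCoeff t u i * qWeight t (update u i 1) =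
      qint t (n - numOnes u) * qWeight t u := by
  have card_zeros : (n : ℤ) - numOnes u = #{k | u k = 0} := by
    have := card_eq_zero_add_numOnes u
    lia
  have inv_pow_four_ne_one : t⁻¹ ^ 4 ≠ 1 := by rwa [inv_pow, inv_ne_one]
  rw [card_zeros, ← qint_inv, ← sum_card_lt_card_gt_eq_qint (inv_ne_zero ht) inv_pow_four_ne_one,
    inv_inv, mul_comm, mul_sum]
  exact sum_congr rfl fun i hi =>
    coprodCoeff_mul_qWeight_update_one ht (mem_filter.mp hi).2

/-- The `q`-symmetric vector of `1̲^{⊗n}` with `j` factors `e_{−1/2}`: the sum of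
`qWeight t u • e_u` over the multi-indices `u` with `numOnes u = j`. These are the weight vectors
of the highest weight summand of `1̲^{⊗n}`. -/
def qSym (t : ℂ) (n j : ℕ) : Vn n := fun u => if numOnes u = j then qWeight t u else 0

theorem qSym_update_zero (t : ℂ) {u : Fin n → Fin 2} {i : Fin n} (hi : u i = 1) (j : ℕ) :
    qSym t n j (update u i 0) = if numOnes u = j + 1 then qWeight t (update u i 0) else 0 := by
  have h := numOnes_update u i 0
  simp only [hi, Fin.val_one, Fin.val_zero, add_zero] at h
  simp only [qSym, ← h, add_left_inj]

theorem qSym_update_one (t : ℂ) {u : Fin n → Fin 2} {i : Fin n} (hi : u i = 0) (j : ℕ) :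
    qSym t n (j + 1) (update u i 1) = if numOnes u = j then qWeight t (update u i 1) else 0 := by
  have h := numOnes_update u i 1
  simp only [hi, Fin.val_one, Fin.val_zero, add_zero] at h
  simp only [qSym, h, add_left_inj]

theorem qSym_eq_zero_of_lt (t : ℂ) {j : ℕ} (hj : n < j) : qSym t n j = 0 := by
  funext u
  have hu := numOnes_lt_succ u
  exact if_neg (by lia)

theorem piK_qSym (ht : t ≠ 0) (j : ℕ) :
    piK t n (qSym t n j) = t ^ ((n : ℤ) - 2 * j) • qSym t n j := by
  funext u
  simp only [piK, ptwiseMul, LinearMap.coe_mk, AddHom.coe_mk, Pi.smul_apply, smul_eq_mul, qSym]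
  split_ifs with hu
  · rw [prod_kD_eq_zpow ht, hu]
  · rw [mul_zero, mul_zero]

theorem piK'_qSym (ht : t ≠ 0) (j : ℕ) :
    piK' t n (qSym t n j) = t ^ (-((n : ℤ) - 2 * j)) • qSym t n j := by
  funext u
  simp only [piK', ptwiseMul, LinearMap.coe_mk, AddHom.coe_mk, Pi.smul_apply, smul_eq_mul, qSym]
  split_ifs with hu
  · rw [kD'_eq_kD_inv, prod_kD_eq_zpow (inv_ne_zero ht), hu, inv_zpow']
  · rw [mul_zero, mul_zero]

theorem piY_qSym (ht : t ≠ 0) (ht4 : t ^ 4 ≠ 1) (j : ℕ) :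
    piY t n (qSym t n j) = qint t (j + 1) • qSym t n (j + 1) := by
  funext u
  rw [piY_apply, sum_congr rfl fun i hi => by rw [qSym_update_zero t (mem_filter.mp hi).2],
    Pi.smul_apply, smul_eq_mul, qSym]
  split_ifs with hu
  · rw [sum_coprodCoeff_mul_qWeight_update_zero ht ht4, hu, Nat.cast_succ]
  · simp only [mul_zero, sum_const_zero]

theorem piX_qSym_zero (t : ℂ) (n : ℕ) : piX t n (qSym t n 0) = 0 := by
  funext u
  rw [piX_apply]
  refine sum_eq_zero fun i hi => ?_
  have h := numOnes_update u i 1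
  simp only [(mem_filter.mp hi).2, Fin.val_one, Fin.val_zero, add_zero] at h
  rw [qSym, h, if_neg (numOnes u).succ_ne_zero, mul_zero]

theorem piX_qSym_succ (ht : t ≠ 0) (ht4 : t ^ 4 ≠ 1) (j : ℕ) :
    piX t n (qSym t n (j + 1)) = qint t (n - j) • qSym t n j := by
  funext u
  rw [piX_apply, sum_congr rfl fun i hi => by rw [qSym_update_one t (mem_filter.mp hi).2],
    Pi.smul_apply, smul_eq_mul, qSym]
  split_ifs with hu
  · rw [sum_coprodCoeff_mul_qWeight_update_one ht ht4, hu]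
  · simp only [mul_zero, sum_const_zero]

end QSymmetric

section TemperleyLieb

variable {t : ℂ} {n : ℕ}

theorem TLE_apply (t : ℂ) (i : Fin n) (w : Vn (n + 1)) (u : Fin (n + 1) → Fin 2) :
    TLE t (n + 1) i (by lia) w u = etaC t (u i.castSucc) (u i.succ) *
      (I * t * w (update (update u i.castSucc 0) i.succ 1) -
        I * t⁻¹ * w (update (update u i.castSucc 1) i.succ 0)) := by
  calc TLE t (n + 1) i (by lia) w u = etaC t (u i.castSucc) (u i.succ) *
        ∑ a, ∑ b, muC t a b * w (update (update u i.castSucc a) i.succ b) := by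
        simp only [TLE, ptwiseMul, LinearMap.funLeft, Fin.sum_univ_two, LinearMap.coe_comp,
          LinearMap.coe_mk, AddHom.coe_mk, comp_apply, LinearMap.add_apply, LinearMap.smul_apply,
          Pi.add_apply, Pi.smul_apply, smul_eq_mul]
        rfl
    _ = _ := by simp [muC, sub_eq_add_neg]

theorem TLE_apply_eq_zero_iff (ht : t ≠ 0) (i : Fin n) (w : Vn (n + 1)) :
    TLE t (n + 1) i (by lia) w = 0 ↔ ∀ u, u i.castSucc = 0 → u i.succ = 1 →
      w (u ∘ swap i.castSucc i.succ) = t ^ 2 * w u := by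
  have hne : i.castSucc ≠ i.succ := i.castSucc_lt_succ.ne
  constructor
  · intro h u h0 h1
    have hu : update (update u i.castSucc 0) i.succ 1 = u := by
      rw [← h0, update_eq_self, ← h1, update_eq_self]
    have key := congrFun h u
    rw [TLE_apply, ← update_update_comp_swap hne u 0 1, hu, h0, h1] at key
    simp only [etaC, Matrix.cons_val', Matrix.cons_val_one, Matrix.cons_val_fin_one,
      Matrix.cons_val_zero, Pi.zero_apply, mul_eq_zero, I_ne_zero, ht, or_self, false_or] at key
    field_simp at key
    rw [mul_zero, mul_eq_zero, or_iff_right I_ne_zero, sub_eq_zero] at key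
    exact key.symm
  · intro h
    funext u
    rw [TLE_apply, ← update_update_comp_swap hne u 0 1,
      h _ (by rw [update_of_ne hne, update_self]) (update_self ..)]
    field_simp
    simp

theorem div_qWeight_comp_adjacent_swap (ht : t ≠ 0) {w : Vn (n + 1)} {i : Fin n}
    (hw : TLE t (n + 1) i (by lia) w = 0) (u : Fin (n + 1) → Fin 2) :
    w (u ∘ swap i.castSucc i.succ) / qWeight t (u ∘ swap i.castSucc i.succ) =
      w u / qWeight t u := by
  have of_zero_one {v} (h0 : v i.castSucc = 0) (h1 : v i.succ = 1) :
      w (v ∘ swap i.castSucc i.succ) / qWeight t (v ∘ swap i.castSucc i.succ) =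
        w v / qWeight t v := by
    rw [(TLE_apply_eq_zero_iff ht i w).mp hw v h0 h1, qWeight_comp_adjacent_swap ht h0 h1,
      mul_div_mul_left _ _ (pow_ne_zero 2 ht)]
  rcases lt_trichotomy (u i.castSucc) (u i.succ) with h | h | h
  · exact of_zero_one (by lia) (by lia)
  · rw [comp_swap_eq_update, h, update_eq_self, ← h, update_eq_self]
  · have swapped := of_zero_one (v := u ∘ swap i.castSucc i.succ)
      (by rw [comp_apply, swap_apply_left]; lia) (by rw [comp_apply, swap_apply_right]; lia)
    rw [comp_assoc, ← Perm.coe_mul, swap_mul_self, Perm.coe_one, comp_id] at swapped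
    exact swapped.symm

theorem div_qWeight_eq_of_numOnes_eq (ht : t ≠ 0) {w : Vn (n + 1)}
    (hw : ∀ i : Fin n, TLE t (n + 1) i (by lia) w = 0) {u v : Fin (n + 1) → Fin 2}
    (huv : numOnes u = numOnes v) : w u / qWeight t u = w v / qWeight t v := by
  obtain ⟨σ, rfl⟩ := exists_comp_perm_eq huv
  exact comp_perm_eq_of_comp_adjacent_swap_eq (h := fun u => w u / qWeight t u)
    (fun u i => div_qWeight_comp_adjacent_swap ht (hw i) u) σ v

end TemperleyLieb

section Intertwiner

variable {t : ℂ} {n : ℕ}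

/-- The inverse of the Gaussian binomial coefficient `[n]! / ([j]! [n − j]!)`; it rescales the
`q`-symmetric vectors to match the standard basis of `n̲`. -/
def gaussBinomInv (t : ℂ) (n j : ℕ) : ℂ := ∏ i ∈ range j, qint t (i + 1) / qint t (n - i)

theorem gaussBinomInv_succ_mul {j : ℕ} (h : qint t (n - j) ≠ 0) :
    gaussBinomInv t n (j + 1) * qint t (n - j) = gaussBinomInv t n j * qint t (j + 1) := by
  rw [gaussBinomInv, prod_range_succ, mul_assoc, div_mul_cancel₀ _ h, gaussBinomInv]

theorem qint_natCast_sub_ne_zero (hq : ∀ k : ℕ, 0 < k → k ≤ n → qint t k ≠ 0) (j : Fin n) :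
    qint t (n - j) ≠ 0 := by
  rw [← Nat.cast_sub j.isLt.le]
  exact hq _ (Nat.sub_pos_of_lt j.isLt) (n.sub_le j)

theorem gaussBinomInv_ne_zero (hq : ∀ k : ℕ, 0 < k → k ≤ n → qint t k ≠ 0) {j : ℕ} (hj : j ≤ n) :
    gaussBinomInv t n j ≠ 0 := by
  refine prod_ne_zero_iff.mpr fun i hi => ?_
  have hin : i < n := (mem_range.mp hi).trans_le hj
  rw [← Nat.cast_succ]
  exact div_ne_zero (hq _ i.succ_pos hin) (qint_natCast_sub_ne_zero hq ⟨i, hin⟩)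

/-- The linear map `n̲ → 1̲^{⊗n}` sending `e_j` to the rescaled `q`-symmetric vector
`gaussBinomInv t n j • qSym t n j`; it commutes with the actions of `Aₜ` and identifies `n̲` with
the highest weight summand. -/
def intertwiner (t : ℂ) (n : ℕ) : (Fin (n + 1) → ℂ) →ₗ[ℂ] Vn n :=
  Fintype.linearCombination ℂ fun j : Fin (n + 1) => gaussBinomInv t n j • qSym t n j

theorem intertwiner_single (t : ℂ) (j : Fin (n + 1)) :
    intertwiner t n (Pi.single j 1) = gaussBinomInv t n j • qSym t n j := by
  rw [intertwiner, Fintype.linearCombination_apply_single, one_smul]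

theorem intertwiner_apply (t : ℂ) (x : Fin (n + 1) → ℂ) (u : Fin n → Fin 2) :
    intertwiner t n x u =
      x ⟨numOnes u, numOnes_lt_succ u⟩ * (gaussBinomInv t n (numOnes u) * qWeight t u) := by
  rw [intertwiner, Fintype.linearCombination_apply, Finset.sum_apply,
    Fintype.sum_eq_single ⟨numOnes u, numOnes_lt_succ u⟩]
  · simp [qSym]
  · intro j hj
    have hu : numOnes u ≠ j := fun h => hj (Fin.ext h.symm)
    simp [qSym, hu]

theorem intertwiner_injective (ht : t ≠ 0) (hq : ∀ k : ℕ, 0 < k → k ≤ n → qint t k ≠ 0) :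
    Injective (intertwiner t n) := by
  refine (injective_iff_map_eq_zero _).mpr fun x hx => funext fun j => ?_
  obtain ⟨u, hu⟩ := exists_numOnes_eq (Fin.is_le j)
  have hju : (⟨numOnes u, numOnes_lt_succ u⟩ : Fin (n + 1)) = j := Fin.ext hu
  have key := congrFun hx u
  rw [intertwiner_apply, hju, Pi.zero_apply, hu] at key
  exact (mul_eq_zero.mp key).resolve_right
    (mul_ne_zero (gaussBinomInv_ne_zero hq (Fin.is_le j)) (qWeight_ne_zero ht u))

theorem mem_range_intertwiner_iff (ht : t ≠ 0)
    (hq : ∀ k : ℕ, 0 < k → k ≤ n + 1 → qint t k ≠ 0) {w : Vn (n + 1)} :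
    w ∈ LinearMap.range (intertwiner t (n + 1)) ↔
      ∀ i : Fin n, TLE t (n + 1) i (by lia) w = 0 := by
  constructor
  · rintro ⟨x, rfl⟩ i
    refine (TLE_apply_eq_zero_iff ht i _).mpr fun u h0 h1 => ?_
    simp only [intertwiner_apply, numOnes_comp_perm, qWeight_comp_adjacent_swap ht h0 h1]
    ring
  · intro hw
    choose v hv using fun j : Fin (n + 2) => exists_numOnes_eq j.is_le
    refine ⟨fun j => w (v j) / qWeight t (v j) / gaussBinomInv t (n + 1) j, funext fun u => ?_⟩
    have c_ne_zero : gaussBinomInv t (n + 1) (numOnes u) ≠ 0 :=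
      gaussBinomInv_ne_zero hq (Nat.le_of_lt_succ (numOnes_lt_succ u))
    rw [intertwiner_apply, ← div_qWeight_eq_of_numOnes_eq ht hw (hv ⟨numOnes u, _⟩).symm]
    field_simp [qWeight_ne_zero ht u]

theorem finrank_range_intertwiner (ht : t ≠ 0)
    (hq : ∀ k : ℕ, 0 < k → k ≤ n → qint t k ≠ 0) :
    Module.finrank ℂ (LinearMap.range (intertwiner t n)) = n + 1 := by
  rw [LinearMap.finrank_range_of_inj (intertwiner_injective ht hq), Module.finrank_fin_fun]

end Intertwiner

section Equivariance

open Matrix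

variable {t : ℂ} {n : ℕ}

theorem comp_eq_comp_mulVecLin {R m M : Type*} [CommSemiring R] [Fintype m] [DecidableEq m]
    [AddCommMonoid M] [Module R M] {φ : (m → R) →ₗ[R] M} {g : M →ₗ[R] M} {A : Matrix m m R}
    (h : ∀ j, g (φ (Pi.single j 1)) = φ (A.col j)) : g ∘ₗ φ = φ ∘ₗ A.mulVecLin := by
  refine (Pi.basisFun R m).ext fun j => ?_
  simpa using h j

theorem Kmat_col (t : ℂ) (j : Fin (n + 1)) :
    (Kmat t n).col j = t ^ ((n : ℤ) - 2 * j) • Pi.single j 1 := by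
  rw [Kmat, ← mulVec_single_one, diagonal_mulVec_single, ← Pi.single_smul, smul_eq_mul]

theorem K'mat_col (t : ℂ) (j : Fin (n + 1)) :
    (K'mat t n).col j = t ^ (-((n : ℤ) - 2 * j)) • Pi.single j 1 := by
  rw [K'mat, ← mulVec_single_one, diagonal_mulVec_single, ← Pi.single_smul, smul_eq_mul]

theorem Xmat_col_zero (t : ℂ) (n : ℕ) : (Xmat t n).col 0 = 0 := by
  funext i
  simp [Xmat]

theorem Xmat_col_succ (t : ℂ) (j : Fin n) :
    (Xmat t n).col j.succ = qint t (j + 1) • Pi.single j.castSucc 1 := by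
  funext i
  simp [Xmat, Pi.single_apply, Fin.ext_iff, eq_comm]

theorem Ymat_col_last (t : ℂ) (n : ℕ) : (Ymat t n).col (Fin.last n) = 0 := by
  funext i
  simp [Ymat, i.isLt.ne]

theorem Ymat_col_castSucc (t : ℂ) (j : Fin n) :
    (Ymat t n).col j.castSucc = qint t (n - j) • Pi.single j.succ 1 := by
  funext i
  simp [Ymat, Pi.single_apply, Fin.ext_iff]

theorem piK_comp_intertwiner (ht : t ≠ 0) :
    piK t n ∘ₗ intertwiner t n = intertwiner t n ∘ₗ (Kmat t n).mulVecLin := by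
  refine comp_eq_comp_mulVecLin fun j => ?_
  rw [Kmat_col, map_smul, intertwiner_single, map_smul, piK_qSym ht, smul_comm]

theorem piK'_comp_intertwiner (ht : t ≠ 0) :
    piK' t n ∘ₗ intertwiner t n = intertwiner t n ∘ₗ (K'mat t n).mulVecLin := by
  refine comp_eq_comp_mulVecLin fun j => ?_
  rw [K'mat_col, map_smul, intertwiner_single, map_smul, piK'_qSym ht, smul_comm]

theorem piX_comp_intertwiner (ht : t ≠ 0) (ht4 : t ^ 4 ≠ 1)
    (hq : ∀ k : ℕ, 0 < k → k ≤ n → qint t k ≠ 0) :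
    piX t n ∘ₗ intertwiner t n = intertwiner t n ∘ₗ (Xmat t n).mulVecLin := by
  refine comp_eq_comp_mulVecLin fun j => ?_
  cases j using Fin.cases with
  | zero => rw [Xmat_col_zero, map_zero, intertwiner_single, map_smul, Fin.val_zero,
      piX_qSym_zero, smul_zero]
  | succ j => rw [Xmat_col_succ, map_smul, intertwiner_single, intertwiner_single, map_smul,
      Fin.val_succ, piX_qSym_succ ht ht4, smul_smul, smul_smul,
      gaussBinomInv_succ_mul (qint_natCast_sub_ne_zero hq j), mul_comm, Fin.val_castSucc]

theorem piY_comp_intertwiner (ht : t ≠ 0) (ht4 : t ^ 4 ≠ 1)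
    (hq : ∀ k : ℕ, 0 < k → k ≤ n → qint t k ≠ 0) :
    piY t n ∘ₗ intertwiner t n = intertwiner t n ∘ₗ (Ymat t n).mulVecLin := by
  refine comp_eq_comp_mulVecLin fun j => ?_
  rw [intertwiner_single, map_smul, piY_qSym ht ht4]
  cases j using Fin.lastCases with
  | last => rw [Ymat_col_last, map_zero, Fin.val_last, qSym_eq_zero_of_lt t n.lt_succ_self,
      smul_zero, smul_zero]
  | cast j => rw [Ymat_col_castSucc, map_smul, intertwiner_single, Fin.val_castSucc, Fin.val_succ,
      smul_smul, smul_smul, ← gaussBinomInv_succ_mul (qint_natCast_sub_ne_zero hq j), mul_comm]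

theorem adjoin_generators_eq_top (t : ℂ) : Algebra.adjoin ℂ {aX t, aY t, aK t, aK' t} = ⊤ := by
  have generators_eq_image : {aX t, aY t, aK t, aK' t} =
      RingQuot.mkAlgHom ℂ (QRel t) '' Set.range (FreeAlgebra.ι ℂ) := by
    ext a
    constructor
    · rintro (rfl | rfl | rfl | rfl) <;> exact ⟨_, ⟨_, rfl⟩, rfl⟩
    · rintro ⟨_, ⟨x, rfl⟩, rfl⟩
      cases x <;> simp [aX, aY, aK, aK', qg]
  rw [generators_eq_image, ← AlgHom.map_adjoin, FreeAlgebra.adjoin_range_ι, Algebra.map_top,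
    AlgHom.range_eq_top]
  exact RingQuot.mkAlgHom_surjective ℂ (QRel t)

theorem apply_intertwiner (ht : t ≠ 0) (ht4 : t ^ 4 ≠ 1)
    (hq : ∀ k : ℕ, 0 < k → k ≤ n → qint t k ≠ 0) {π : At t →ₐ[ℂ] Module.End ℂ (Vn n)}
    (hπ : IsPi t n π) {ρ : At t →ₐ[ℂ] Matrix (Fin (n + 1)) (Fin (n + 1)) ℂ} (hρ : IsRho t n ρ)
    (Z : At t) (x : Fin (n + 1) → ℂ) :
    π Z (intertwiner t n x) = intertwiner t n (ρ Z *ᵥ x) := by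
  obtain ⟨hπX, hπY, hπK, hπK'⟩ := hπ
  obtain ⟨hρX, hρY, hρK, hρK'⟩ := hρ
  refine intertwines_of_adjoin_eq_top (adjoin_generators_eq_top t) π
    (toLinAlgEquiv'.toAlgHom.comp ρ) (intertwiner t n) ?_ Z x
  rintro _ (rfl | rfl | rfl | rfl) x
  · rw [hπX]
    exact (LinearMap.congr_fun (piX_comp_intertwiner ht ht4 hq) x).trans (by simp [hρX])
  · rw [hπY]
    exact (LinearMap.congr_fun (piY_comp_intertwiner ht ht4 hq) x).trans (by simp [hρY])
  · rw [hπK]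
    exact (LinearMap.congr_fun (piK_comp_intertwiner ht) x).trans (by simp [hρK])
  · rw [hπK']
    exact (LinearMap.congr_fun (piK'_comp_intertwiner ht) x).trans (by simp [hρK'])

end Equivariance

theorem stmt12_general (t : ℂ) (ht : t ≠ 0) (n : ℕ)
    (hroot : ∀ k : ℕ, 0 < k → k ≤ n → t ^ (4 * k) ≠ 1)
    (hn : 1 ≤ n) (π : At t →ₐ[ℂ] Module.End ℂ (Vn n)) (hπ : IsPi t n π)
    (ρ : At t →ₐ[ℂ] Matrix (Fin (n + 1)) (Fin (n + 1)) ℂ) (hρ : IsRho t n ρ)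
    (f : Module.End ℂ (Vn n))
    (hf : f ∈ Algebra.adjoin ℂ
        {g : Module.End ℂ (Vn n) | ∃ (i : ℕ) (h : i + 1 < n), g = TLE t n i h})
    (hidem : f * f = f) (hne : f ≠ 0)
    (hkill : ∀ (i : ℕ) (h : i + 1 < n), TLE t n i h * f = 0) :
    (∀ (Z : At t) (w : Vn n), w ∈ LinearMap.range f → π Z w ∈ LinearMap.range f) ∧
    Module.finrank ℂ (LinearMap.range f) = n + 1 ∧
    ∃ φ : (Fin (n + 1) → ℂ) →ₗ[ℂ] Vn n,
      Function.Injective φ ∧ LinearMap.range φ = LinearMap.range f ∧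
      ∀ (Z : At t) (x : Fin (n + 1) → ℂ), π Z (φ x) = φ ((ρ Z).mulVec x) := by
  obtain ⟨n, rfl⟩ : ∃ m, n = m + 1 := Nat.exists_eq_add_of_le' hn
  have ht4 : t ^ 4 ≠ 1 := hroot 1 one_pos hn
  have hq (k : ℕ) (hk : 0 < k) (hkn : k ≤ n + 1) : qint t k ≠ 0 :=
    qint_natCast_ne_zero ht ht4 (hroot k hk hkn)
  have range_eq : LinearMap.range (intertwiner t (n + 1)) = LinearMap.range f := by
    ext w
    rw [mem_range_intertwiner_iff ht hq, mem_range_idempotent_of_mem_adjoin_iff hf hidem hne]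
    · constructor
      · rintro h _ ⟨i, hi, rfl⟩
        exact h ⟨i, by lia⟩
      · exact fun h i => h _ ⟨i, by lia, rfl⟩
    · rintro _ ⟨i, hi, rfl⟩
      exact hkill i hi
  have equivariant := apply_intertwiner ht ht4 hq hπ hρ
  rw [← range_eq]
  refine ⟨?_, finrank_range_intertwiner ht hq, intertwiner t (n + 1),
    intertwiner_injective ht hq, rfl, equivariant⟩
  rintro Z _ ⟨x, rfl⟩
  exact ⟨(ρ Z).mulVec x, (equivariant Z x).symm⟩

/-- The image of the Jones–Wenzl idempotent `f_n` is an `Aₜ`-submodule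
of `1̲^{⊗n}` of dimension `n+1`, isomorphic as an `Aₜ`-module to the irreducible
module `n̲`. -/
theorem stmt12 (t : ℂ) (ht : t ≠ 0) (hroot : ∀ k : ℕ, 0 < k → t ^ k ≠ 1) (n : ℕ)
    (hn : 1 ≤ n) (π : At t →ₐ[ℂ] Module.End ℂ (Vn n)) (hπ : IsPi t n π)
    (ρ : At t →ₐ[ℂ] Matrix (Fin (n + 1)) (Fin (n + 1)) ℂ) (hρ : IsRho t n ρ)
    (f : Module.End ℂ (Vn n))
    (hf : f ∈ Algebra.adjoin ℂ
        {g : Module.End ℂ (Vn n) | ∃ (i : ℕ) (h : i + 1 < n), g = TLE t n i h})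
    (hidem : f * f = f) (hne : f ≠ 0)
    (hkill : ∀ (i : ℕ) (h : i + 1 < n), TLE t n i h * f = 0 ∧ f * TLE t n i h = 0) :
    -- the image of `f` is an `Aₜ`-submodule …
    (∀ (Z : At t) (w : Vn n), w ∈ LinearMap.range f → π Z w ∈ LinearMap.range f) ∧
    -- … of dimension `n + 1` …
    Module.finrank ℂ (LinearMap.range f) = n + 1 ∧
    -- … isomorphic as an `Aₜ`-module to `n̲`
    ∃ φ : (Fin (n + 1) → ℂ) →ₗ[ℂ] Vn n,
      Function.Injective φ ∧ LinearMap.range φ = LinearMap.range f ∧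
      ∀ (Z : At t) (x : Fin (n + 1) → ℂ), π Z (φ x) = φ ((ρ Z).mulVec x) :=
  stmt12_general t ht n (fun k hk _ => hroot (4 * k) (by lia)) hn π hπ ρ hρ f hf hidem hne
    fun i h => (hkill i h).1

end
end
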